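/- Let α be an irrational real number and let (m_k) be given by the Master recursion. Then the radius of convergence R of the power series Σ_{k≥1} m_k x^k satisfies R ≤ 4/e. -/

import Mathlib

/-- `D α k = 2(1 - cos(2πkα))`, the small denominator of the Master recursion. -/
noncomputable def D (α : ℝ) (k : ℕ) : ℝ := 2 * (1 - Real.cos (2 * Real.pi * k * α))

/-!
The relation `k F_k = ∑ j m_j F_{k-j}` says `F' = m' F` for the generating functions `m(x)` and
`F(x)`, so `F(x) = exp (m(x))` wherever both series converge. The relation
`F_k = d_{k+1} m_{k+1}` with denominators bounded by `c` gives `x F(x) ≤ c m(x)`. Hence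
`x ≤ c m(x) exp (-m(x)) ≤ c / e`, because `M exp (-M)` never exceeds `1 / e`.
-/

open PowerSeries Finset Filter

theorem derivative_mk_eq_mul_of_natCast_mul_eq_sum {A : Type*} [CommSemiring A] {a b : ℕ → A}
    (hab : ∀ k : ℕ, 1 ≤ k → (k : A) * b k = ∑ j ∈ Icc 1 k, (j : A) * a j * b (k - j)) :
    d⁄dX A (PowerSeries.mk b) = d⁄dX A (PowerSeries.mk a) * PowerSeries.mk b := by
  ext k
  rw [coeff_derivative, coeff_mul, Nat.sum_antidiagonal_eq_sum_range_succ_mk, coeff_mk,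
    ← Nat.cast_succ, mul_comm, hab (k + 1) k.succ_pos, ← Ico_succ_right_eq_Icc,
    sum_Ico_eq_sum_range]
  refine sum_congr rfl fun j _ => ?_
  rw [coeff_derivative, coeff_mk, coeff_mk, add_comm 1 j, Nat.add_sub_add_right, Nat.cast_succ,
    mul_comm (a _)]

theorem summable_mul_pow_of_norm_lt {K : Type*} [NormedDivisionRing K] [CompleteSpace K]
    {a : ℕ → K} {r x : K} (hr : Summable fun k => a k * r ^ k) (hx : ‖x‖ < ‖r‖) :
    Summable fun k => a k * x ^ k :=
  summable_powerSeries_of_norm_lt hr.hasSum.tendsto_sum_nat.cauchySeq hx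

/-- The value at `x` of a formal power series, as the sum of its terms; it carries the value `0`
when the terms are not summable. -/
noncomputable def powerSeriesSum {A : Type*} [CommSemiring A] [TopologicalSpace A] (f : A⟦X⟧)
    (x : A) : A := ∑' k, coeff k f * x ^ k

theorem powerSeriesSum_zero {A : Type*} [CommSemiring A] [TopologicalSpace A] (f : A⟦X⟧) :
    powerSeriesSum f 0 = constantCoeff f := by
  rw [powerSeriesSum, tsum_eq_single 0 fun k hk => by rw [zero_pow hk, mul_zero], pow_zero, mul_one,
    coeff_zero_eq_constantCoeff_apply]

theorem powerSeriesSum_mul {A : Type*} [NormedCommRing A] [CompleteSpace A] {f g : A⟦X⟧} {x : A}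
    (hf : Summable fun k => ‖coeff k f * x ^ k‖) (hg : Summable fun k => ‖coeff k g * x ^ k‖) :
    powerSeriesSum (f * g) x = powerSeriesSum f x * powerSeriesSum g x := by
  rw [powerSeriesSum, powerSeriesSum, powerSeriesSum,
    tsum_mul_tsum_eq_tsum_sum_antidiagonal_of_summable_norm hf hg]
  refine tsum_congr fun k => ?_
  rw [coeff_mul, sum_mul]
  refine sum_congr rfl fun p hp => ?_
  rw [← mem_antidiagonal.1 hp, pow_add, mul_mul_mul_comm]

section RCLike

variable {𝕜 : Type*} [RCLike 𝕜] {f g : 𝕜⟦X⟧} {r x : 𝕜}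

theorem summable_coeff_derivative_mul_pow_of_norm_lt (hr : Summable fun k => coeff k f * r ^ k)
    (hx : ‖x‖ < ‖r‖) : Summable fun k => coeff k (d⁄dX 𝕜 f) * x ^ k := by
  have hr0 : r ≠ 0 := norm_pos_iff.1 ((norm_nonneg x).trans_lt hx)
  have hq : ‖x / r‖ < 1 := by rwa [norm_div, div_lt_one (norm_pos_iff.2 hr0)]
  have hshift : Summable fun k => coeff (k + 1) f * r ^ (k + 1) :=
    hr.comp_injective (add_left_injective 1)
  have hgeom : Tendsto (fun k : ℕ => (k + 1 : 𝕜) * (x / r) ^ k / r) atTop (nhds 0) := by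
    simpa using
      (summable_choose_mul_geometric_of_norm_lt_one 1 hq).tendsto_atTop_zero.div_const r
  have hfactor : ∀ k, coeff (k + 1) f * r ^ (k + 1) * ((k + 1) * (x / r) ^ k / r) =
      coeff k (d⁄dX 𝕜 f) * x ^ k := fun k => by
    rw [coeff_derivative, div_pow, pow_succ]
    field_simp
  have hO : (fun k => coeff k (d⁄dX 𝕜 f) * x ^ k) =O[atTop]
      fun k => coeff (k + 1) f * r ^ (k + 1) := by
    simpa only [hfactor, mul_one] using
      (Asymptotics.isBigO_refl (fun k => coeff (k + 1) f * r ^ (k + 1)) atTop).mul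
        (hgeom.isBigO_one 𝕜)
  exact summable_of_isBigO_nat hshift.norm hO.norm_right

theorem hasDerivAt_powerSeriesSum (hr : Summable fun k => coeff k f * r ^ k) (hx : ‖x‖ < ‖r‖) :
    HasDerivAt (powerSeriesSum f) (powerSeriesSum (d⁄dX 𝕜 f) x) x := by
  obtain ⟨s, hxs, hsr⟩ := exists_between hx
  have hs : 0 < s := (norm_nonneg x).trans_lt hxs
  have hs_norm : ‖(s : 𝕜)‖ = s := RCLike.norm_of_nonneg hs.le
  have hderiv_s : Summable fun k => coeff k (d⁄dX 𝕜 f) * (s : 𝕜) ^ k :=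
    summable_coeff_derivative_mul_pow_of_norm_lt hr (by rwa [hs_norm])
  have hbound : Summable fun k : ℕ => ‖coeff k f‖ * (k * s ^ (k - 1)) := by
    refine (summable_nat_add_iff 1).1 (hderiv_s.norm.congr fun k => ?_)
    rw [coeff_derivative, norm_mul, norm_mul, norm_pow, hs_norm, add_tsub_cancel_right, mul_assoc]
    norm_cast
  have hterm : ∀ k : ℕ, ∀ y ∈ Metric.ball (0 : 𝕜) s,
      ‖coeff k f * (k * y ^ (k - 1))‖ ≤ ‖coeff k f‖ * (k * s ^ (k - 1)) := fun k y hy => by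
    rw [norm_mul, norm_mul, norm_pow, RCLike.norm_natCast]
    gcongr
    exact (mem_ball_zero_iff.1 hy).le
  have hderiv := hasDerivAt_tsum_of_isPreconnected hbound Metric.isOpen_ball
    (convex_ball (0 : 𝕜) s).isPreconnected (fun k y _ => (hasDerivAt_pow k y).const_mul (coeff k f))
    hterm (mem_ball_zero_iff.2 hxs) (summable_mul_pow_of_norm_lt hr hx)
    (mem_ball_zero_iff.2 hxs)
  have hsum : Summable fun k : ℕ => coeff k f * (k * x ^ (k - 1)) :=
    .of_norm_bounded hbound fun k => hterm k x (mem_ball_zero_iff.2 hxs)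
  refine hderiv.congr_deriv ?_
  rw [hsum.tsum_eq_zero_add, Nat.cast_zero, zero_mul, mul_zero, zero_add]
  refine tsum_congr fun k => ?_
  rw [coeff_derivative, Nat.cast_succ, add_tsub_cancel_right, mul_assoc]

theorem powerSeriesSum_eq_exp_of_derivative_eq_mul (hfg : d⁄dX 𝕜 g = d⁄dX 𝕜 f * g)
    (hf0 : constantCoeff f = 0) (hg0 : constantCoeff g = 1)
    (hf : Summable fun k => coeff k f * r ^ k) (hg : Summable fun k => coeff k g * r ^ k)
    (hx : ‖x‖ < ‖r‖) : powerSeriesSum g x = NormedSpace.exp (powerSeriesSum f x) := by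
  have hderiv : ∀ y ∈ Metric.ball (0 : 𝕜) ‖r‖, HasDerivAt
      (fun y => powerSeriesSum g y * NormedSpace.exp (-powerSeriesSum f y)) 0 y := fun y hy => by
    have hyr : ‖y‖ < ‖r‖ := mem_ball_zero_iff.1 hy
    have hexp := (hasDerivAt_exp (𝕂 := 𝕜)).comp y (hasDerivAt_powerSeriesSum hf hyr).neg
    refine ((hasDerivAt_powerSeriesSum hg hyr).mul hexp).congr_deriv ?_
    rw [hfg, powerSeriesSum_mul (summable_coeff_derivative_mul_pow_of_norm_lt hf hyr).norm
      (summable_mul_pow_of_norm_lt hg hyr).norm]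
    simp only [Function.comp_apply, Pi.neg_apply]
    ring
  have hconst := Metric.isOpen_ball.is_const_of_deriv_eq_zero
    (convex_ball (0 : 𝕜) ‖r‖).isPreconnected
    (fun y hy => (hderiv y hy).differentiableAt.differentiableWithinAt)
    (fun y hy => (hderiv y hy).deriv) (mem_ball_zero_iff.2 hx)
    (Metric.mem_ball_self ((norm_nonneg x).trans_lt hx))
  simp only [powerSeriesSum_zero, hf0, hg0, neg_zero, NormedSpace.exp_zero, mul_one] at hconst
  calc powerSeriesSum g x
      = powerSeriesSum g x * NormedSpace.exp (-powerSeriesSum f x + powerSeriesSum f x) := by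
        rw [neg_add_cancel, NormedSpace.exp_zero, mul_one]
    _ = NormedSpace.exp (powerSeriesSum f x) := by
        rw [NormedSpace.exp_add, ← mul_assoc, hconst, one_mul]

end RCLike

/-- The Master recursion with an arbitrary sequence `d` of denominators, indexed from `1`, in place
of `D α`; the bound on the radius of convergence depends only on an upper bound for `d`. -/
structure MasterRecursion (d m F : ℕ → ℝ) : Prop where
  m_zero : m 0 = 0
  F_zero : F 0 = 1
  m_succ : ∀ k, m (k + 1) = F k / d (k + 1)
  mul_F : ∀ k : ℕ, 1 ≤ k → (k : ℝ) * F k = ∑ j ∈ Icc 1 k, (j : ℝ) * m j * F (k - j)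

namespace MasterRecursion

variable {c r x : ℝ} {d m F : ℕ → ℝ}

theorem F_nonneg (h : MasterRecursion d m F) (hd : ∀ k, 0 < d (k + 1)) (k : ℕ) : 0 ≤ F k := by
  induction k using Nat.strong_induction_on with
  | _ k ih =>
    rcases Nat.eq_zero_or_pos k with rfl | hk
    · exact h.F_zero ▸ zero_le_one
    have hsum : 0 ≤ ∑ j ∈ Icc 1 k, (j : ℝ) * m j * F (k - j) := sum_nonneg fun j hj => by
      obtain ⟨hj1, hjk⟩ := mem_Icc.1 hj
      obtain ⟨i, rfl⟩ := Nat.exists_eq_add_of_le' hj1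
      rw [h.m_succ]
      exact mul_nonneg (mul_nonneg (Nat.cast_nonneg _) (div_nonneg (ih i hjk) (hd i).le))
        (ih _ (by lia))
    exact nonneg_of_mul_nonneg_right (hsum.trans_eq (h.mul_F k hk).symm) (Nat.cast_pos.2 hk)

theorem F_le_mul_m_succ (h : MasterRecursion d m F) (hd : ∀ k, 0 < d (k + 1))
    (hdc : ∀ k, d (k + 1) ≤ c) (k : ℕ) : F k ≤ c * m (k + 1) := by
  rw [h.m_succ, mul_div_assoc', le_div_iff₀ (hd k), mul_comm]
  exact mul_le_mul_of_nonneg_right (hdc k) (h.F_nonneg hd k)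

theorem mul_F_mul_pow_le (h : MasterRecursion d m F) (hd : ∀ k, 0 < d (k + 1))
    (hdc : ∀ k, d (k + 1) ≤ c) (hx : 0 ≤ x) (k : ℕ) :
    x * (F k * x ^ k) ≤ c * (m (k + 1) * x ^ (k + 1)) :=
  calc x * (F k * x ^ k) = F k * x ^ (k + 1) := by ring
    _ ≤ c * m (k + 1) * x ^ (k + 1) := by gcongr; exact h.F_le_mul_m_succ hd hdc k
    _ = c * (m (k + 1) * x ^ (k + 1)) := mul_assoc _ _ _

theorem summable_F_mul_pow (h : MasterRecursion d m F) (hd : ∀ k, 0 < d (k + 1))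
    (hdc : ∀ k, d (k + 1) ≤ c) (hx : 0 < x) (hm : Summable fun k => m k * x ^ k) :
    Summable fun k => F k * x ^ k :=
  (summable_mul_left_iff hx.ne').1 <|
    .of_nonneg_of_le (fun k => mul_nonneg hx.le (mul_nonneg (h.F_nonneg hd k) (by positivity)))
      (h.mul_F_mul_pow_le hd hdc hx.le) (((summable_nat_add_iff 1).2 hm).mul_left c)

theorem mul_powerSeriesSum_F_le (h : MasterRecursion d m F) (hd : ∀ k, 0 < d (k + 1))
    (hdc : ∀ k, d (k + 1) ≤ c) (hx : 0 < x) (hm : Summable fun k => m k * x ^ k) :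
    x * powerSeriesSum (PowerSeries.mk F) x ≤ c * powerSeriesSum (PowerSeries.mk m) x := by
  simp only [powerSeriesSum, coeff_mk]
  rw [hm.tsum_eq_zero_add, h.m_zero, zero_mul, zero_add, ← tsum_mul_left, ← tsum_mul_left]
  exact ((h.summable_F_mul_pow hd hdc hx hm).mul_left x).tsum_le_tsum
    (h.mul_F_mul_pow_le hd hdc hx.le) (((summable_nat_add_iff 1).2 hm).mul_left c)

theorem powerSeriesSum_F_eq_exp (h : MasterRecursion d m F)
    (hm : Summable fun k => m k * r ^ k) (hF : Summable fun k => F k * r ^ k) (hx : |x| < |r|) :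
    powerSeriesSum (PowerSeries.mk F) x = Real.exp (powerSeriesSum (PowerSeries.mk m) x) := by
  rw [Real.exp_eq_exp_ℝ]
  exact powerSeriesSum_eq_exp_of_derivative_eq_mul
    (derivative_mk_eq_mul_of_natCast_mul_eq_sum h.mul_F) (by simpa using h.m_zero)
    (by simpa using h.F_zero) (by simpa using hm) (by simpa using hF) hx

theorem le_div_exp_one_of_summable (h : MasterRecursion d m F) (hd : ∀ k, 0 < d (k + 1))
    (hdc : ∀ k, d (k + 1) ≤ c) (hx : 0 < x) (hxr : x < r) (hm : Summable fun k => m k * r ^ k) :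
    x ≤ c / Real.exp 1 := by
  have hr : 0 < r := hx.trans hxr
  have hxr_abs : |x| < |r| := by rwa [abs_of_pos hx, abs_of_pos hr]
  have hc : 0 ≤ c := (hd 0).le.trans (hdc 0)
  set M := powerSeriesSum (PowerSeries.mk m) x with hM
  have hmx : Summable fun k => m k * x ^ k := summable_mul_pow_of_norm_lt hm hxr_abs
  have hexp : x * Real.exp M ≤ c * M := by
    rw [hM, ← h.powerSeriesSum_F_eq_exp hm (h.summable_F_mul_pow hd hdc hr hm) hxr_abs]
    exact h.mul_powerSeriesSum_F_le hd hdc hx hmx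
  calc x = x * Real.exp M * Real.exp (-M) := by
        rw [mul_assoc, ← Real.exp_add, add_neg_cancel, Real.exp_zero, mul_one]
    _ ≤ c * M * Real.exp (-M) := by gcongr
    _ = c * (M * Real.exp (-M)) := mul_assoc _ _ _
    _ ≤ c * Real.exp (-1) := by gcongr; exact Real.mul_exp_neg_le_exp_neg_one M
    _ = c / Real.exp 1 := by rw [Real.exp_neg, div_eq_mul_inv]

end MasterRecursion

theorem D_le_four (α : ℝ) (k : ℕ) : D α k ≤ 4 := by
  unfold D
  linarith [Real.neg_one_le_cos (2 * Real.pi * k * α)]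

theorem D_pos {α : ℝ} (hα : Irrational α) {k : ℕ} (hk : k ≠ 0) : 0 < D α k := by
  have hcos : Real.cos (2 * Real.pi * k * α) ≠ 1 := by
    rw [Ne, Real.cos_eq_one_iff]
    rintro ⟨n, hn⟩
    have hkα : (k : ℝ) * α = n := mul_left_cancel₀ Real.two_pi_pos.ne' (by linarith)
    exact (hα.natCast_mul hk).ne_int n hkα
  exact mul_pos two_pos (sub_pos.2 ((Real.cos_le_one _).lt_of_ne hcos))

theorem stmt3_general {c R : ℝ} {d m F : ℕ → ℝ} (h : MasterRecursion d m F)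
    (hd : ∀ k, 0 < d (k + 1)) (hdc : ∀ k, d (k + 1) ≤ c)
    (hconv : ∀ r : ℝ, 0 ≤ r → r < R → Summable fun k : ℕ => m k * r ^ k) :
    R ≤ c / Real.exp 1 := by
  by_contra! hR
  have hc : 0 ≤ c := (hd 0).le.trans (hdc 0)
  obtain ⟨x, hx, hxR⟩ := exists_between hR
  obtain ⟨r, hxr, hrR⟩ := exists_between hxR
  have hx0 : 0 < x := (div_nonneg hc (Real.exp_pos 1).le).trans_lt hx
  have hm := hconv r (hx0.trans hxr).le hrR
  exact hx.not_ge (h.le_div_exp_one_of_summable hd hdc hx0 hxr hm)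

/-- the radius of convergence of `Σ m_k x^k` is at most `4/e`, expressed
as: any `R` such that the series converges on `[0, R)` satisfies `R ≤ 4/e`. -/
theorem stmt3 (α : ℝ) (hα : Irrational α) (m F : ℕ → ℝ)
    (hm0 : m 0 = 0) (hF0 : F 0 = 1)
    (hm : ∀ k : ℕ, m (k + 1) = F k / D α (k + 1))
    (hF : ∀ k : ℕ, 1 ≤ k →
      (k : ℝ) * F k = ∑ j ∈ Finset.Icc 1 k, (j : ℝ) * m j * F (k - j))
    (R : ℝ)
    (hconv : ∀ r : ℝ, 0 ≤ r → r < R → Summable fun k : ℕ => m k * r ^ k) :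
    R ≤ 4 / Real.exp 1 :=
  stmt3_general ⟨hm0, hF0, hm, hF⟩ (fun k => D_pos hα k.succ_ne_zero)
    (fun _ => D_le_four α _) hconv
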